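/- Let X be a compact topological space and F ⊆ C(X, ℝ) a uniformly bounded set of continuous real-valued functions on X. The following are equivalent: (1) no sequence of functions from F is an l₁-sequence; (2) F is tame, i.e. no sequence of functions from F is independent; (3) every sequence in F has a subsequence converging pointwise on X to some function X → ℝ; (4) every function in the closure of F in ℝ^X with the topology of pointwise convergence is fragmented; (5) F is eventually fragmented, i.e. every sequence in F has a subsequence which, as a family, is a fragmented family on X. -/

import Mathlib

open Filter

/-- A sequence `(f n)` of real-valued functions on `Z` is *independent* if there are
reals `a < b` such that for all disjoint finite sets `P, M ⊆ ℕ` the set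
`⋂_{n ∈ P} {f n < a} ∩ ⋂_{n ∈ M} {f n > b}` is nonempty. -/
def IsIndependentSeq {Z : Type*} (f : ℕ → Z → ℝ) : Prop :=
  ∃ a b : ℝ, a < b ∧ ∀ P M : Finset ℕ, Disjoint P M →
    ((⋂ n ∈ P, {z | f n z < a}) ∩ ⋂ n ∈ M, {z | b < f n z}).Nonempty

/-- A uniformly bounded sequence `(f n)` is an *`l₁`-sequence* if there is `a > 0` with
`a · Σ |cᵢ| ≤ sup_z |Σ cᵢ · fᵢ(z)|` for all `n` and scalars `c₀, …, c_{n-1}`. -/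
def IsL1Seq {Z : Type*} (f : ℕ → Z → ℝ) : Prop :=
  ∃ a : ℝ, 0 < a ∧ ∀ n : ℕ, ∀ c : ℕ → ℝ,
    a * ∑ i ∈ Finset.range n, |c i| ≤ ⨆ z : Z, |∑ i ∈ Finset.range n, c i * f i z|

/-- A real-valued function on a topological space is *fragmented* if every nonempty
subset has a relatively nonempty open trace on which the function is `ε`-small. -/
def IsFragmentedFn {X : Type*} [TopologicalSpace X] (φ : X → ℝ) : Prop :=
  ∀ A : Set X, A.Nonempty → ∀ ε : ℝ, 0 < ε → ∃ O : Set X, IsOpen O ∧ (O ∩ A).Nonempty ∧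
    ∀ x ∈ O ∩ A, ∀ y ∈ O ∩ A, |φ x - φ y| ≤ ε

/-- A family of real-valued functions is a *fragmented family* if the open set can be
chosen simultaneously for all members of the family. -/
def IsFragmentedFamilyR {X : Type*} [TopologicalSpace X] (F : Set (X → ℝ)) : Prop :=
  ∀ A : Set X, A.Nonempty → ∀ ε : ℝ, 0 < ε → ∃ O : Set X, IsOpen O ∧ (O ∩ A).Nonempty ∧
    ∀ f ∈ F, ∀ x ∈ O ∩ A, ∀ y ∈ O ∩ A, |f x - f y| ≤ ε

/-!
If a tame family were not fragmented, its members would cross a fixed interval `[a, b]` on every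
relatively open part of some set `A`, and splitting finitely many open sets again and again by such
crossings would produce an independent sequence. Finitely many crossings of a function in the
pointwise closure are shared by a member of the family, which settles the closure. For a sequence,
a diagonal argument over filters first passes to a subsequence along which `A` survives every
further thinning. Fragmentation on a second countable space provides countable nets, hence
pointwise convergent subsequences.

Conversely, an independent sequence on a compact space realises every pattern of low and high
values. In a minimal closed set over the Cantor space of patterns, open pieces project onto sets
with interior, so each of them contains a point where the sequence is eventually low and one where
it is eventually high. Independence also gives the `l₁`-estimate, by splitting a sum according to
the signs of its coefficients. Finally, differences of consecutive terms of a convergent sequence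
are pointwise null, so by the Hahn-Banach and Riesz-Markov theorems and dominated convergence some
convex combination of their absolute values is uniformly small, against the `l₁`-estimate.
-/

open Topology

/-- A family of real-valued functions is *tame* if no sequence of its members is independent. -/
def IsTame {Z : Type*} (F : Set (Z → ℝ)) : Prop :=
  ¬ ∃ f : ℕ → Z → ℝ, (∀ n, f n ∈ F) ∧ IsIndependentSeq f

/-- `f` *crosses* the interval `[a, b]` on `s` if it takes values below `a` and above `b` there.
Oscillation is measured through crossings of rational intervals, of which there are countably
many. -/
def Crosses {Z : Type*} (f : Z → ℝ) (a b : ℝ) (s : Set Z) : Prop :=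
  (∃ x ∈ s, f x < a) ∧ ∃ x ∈ s, b < f x

section Crossings

variable {Z : Type*} {f : Z → ℝ} {a b : ℝ} {s t : Set Z}

lemma Crosses.mono (hst : s ⊆ t) (h : Crosses f a b s) : Crosses f a b t :=
  ⟨h.1.imp fun _ hx => ⟨hst hx.1, hx.2⟩, h.2.imp fun _ hx => ⟨hst hx.1, hx.2⟩⟩

lemma Crosses.eventually_nhds (h : Crosses f a b s) : ∀ᶠ g in 𝓝 f, Crosses g a b s := by
  obtain ⟨⟨x, hx, hxa⟩, y, hy, hby⟩ := h
  filter_upwards [(continuous_apply x).continuousAt.eventually_lt_const hxa,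
    (continuous_apply y).continuousAt.eventually_const_lt hby] with g hgx hgy
  exact ⟨⟨x, hx, hgx⟩, y, hy, hgy⟩

lemma exists_mem_crosses_of_mem_closure {F : Set (Z → ℝ)} (hf : f ∈ closure F)
    {S : Set (Set Z)} (hS : S.Finite) (hcross : ∀ s ∈ S, Crosses f a b s) :
    ∃ g ∈ F, ∀ s ∈ S, Crosses g a b s := by
  have hnear : ∀ᶠ g in 𝓝 f, ∀ s ∈ S, Crosses g a b s :=
    (Filter.eventually_all_finite hS).2 fun s hs => (hcross s hs).eventually_nhds
  obtain ⟨g, hgF, hg⟩ := ((mem_closure_iff_frequently.1 hf).and_eventually hnear).exists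
  exact ⟨g, hgF, hg⟩

lemma exists_finset_rat_separating (C : ℝ) {ε : ℝ} (hε : 0 < ε) :
    ∃ T : Finset (ℚ × ℚ), (∀ q ∈ T, q.1 < q.2) ∧
      ∀ s ∈ Set.Icc (-C) C, ∀ t ∈ Set.Icc (-C) C, s + ε ≤ t →
        ∃ q ∈ T, s < (q.1 : ℝ) ∧ (q.2 : ℝ) < t := by
  classical
  let K : Set (ℝ × ℝ) := (Set.Icc (-C) C ×ˢ Set.Icc (-C) C) ∩ {p | p.1 + ε ≤ p.2}
  have hK : IsCompact K := (isCompact_Icc.prod isCompact_Icc).inter_right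
    (isClosed_le (by fun_prop) (by fun_prop))
  let U (q : {q : ℚ × ℚ // q.1 < q.2}) : Set (ℝ × ℝ) := Set.Iio (q.1.1 : ℝ) ×ˢ Set.Ioi (q.1.2 : ℝ)
  have hKU : K ⊆ ⋃ q, U q := by
    rintro ⟨s, t⟩ ⟨-, hst : s + ε ≤ t⟩
    obtain ⟨q, hsq, hqt⟩ := exists_rat_btwn (show s < t by linarith)
    obtain ⟨r, hqr, hrt⟩ := exists_rat_btwn hqt
    exact Set.mem_iUnion.2 ⟨⟨(q, r), Rat.cast_lt.1 hqr⟩, hsq, hrt⟩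
  obtain ⟨T, hT⟩ := hK.elim_finite_subcover U (fun _ => isOpen_Iio.prod isOpen_Ioi) hKU
  refine ⟨T.image Subtype.val, Finset.forall_mem_image.2 fun q _ => q.2, fun s hs t ht hst => ?_⟩
  obtain ⟨q, hqT, hsq, hqt⟩ := Set.mem_iUnion₂.1 (hT (⟨⟨hs, ht⟩, hst⟩ : (s, t) ∈ K))
  exact ⟨q.1, Finset.mem_image_of_mem _ hqT, hsq, hqt⟩

lemma exists_finset_rat_abs_sub_le_of_not_crosses (C : ℝ) {ε : ℝ} (hε : 0 < ε) :
    ∃ T : Finset (ℚ × ℚ), (∀ q ∈ T, q.1 < q.2) ∧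
      ∀ (f : Z → ℝ) (s : Set Z), (∀ x, |f x| ≤ C) → (∀ q ∈ T, ¬ Crosses f q.1 q.2 s) →
        ∀ x ∈ s, ∀ y ∈ s, |f x - f y| ≤ ε := by
  obtain ⟨T, hT, hsep⟩ := exists_finset_rat_separating C hε
  refine ⟨T, hT, fun f s hC hcross => ?_⟩
  have hle : ∀ x ∈ s, ∀ y ∈ s, f x - f y ≤ ε := fun x hx y hy => by
    by_contra! hlt
    obtain ⟨q, hq, hyq, hqx⟩ := hsep (f y) (abs_le.1 (hC y)) (f x) (abs_le.1 (hC x)) (by linarith)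
    exact hcross q hq ⟨⟨y, hy, hyq⟩, x, hx, hqx⟩
  exact fun x hx y hy => abs_sub_le_iff.2 ⟨hle x hx y hy, hle y hy x hx⟩

end Crossings

section Independence

variable {Z : Type*} {a b : ℝ}

/-- The trace of a family of sets on the two halves `{f < a}` and `{b < f}`. -/
def splitFamily (f : Z → ℝ) (a b : ℝ) (S : Set (Set Z)) : Set (Set Z) :=
  (· ∩ {x | f x < a}) '' S ∪ (· ∩ {x | b < f x}) '' S

lemma isIndependentSeq_of_splitFamily_subset (hab : a < b) {f : ℕ → Z → ℝ} {S : ℕ → Set (Set Z)}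
    (h₀ : (S 0).Nonempty) (hne : ∀ n, ∀ s ∈ S n, s.Nonempty)
    (hsplit : ∀ n, splitFamily (f n) a b (S n) ⊆ S (n + 1)) : IsIndependentSeq f := by
  classical
  have hpattern : ∀ (P : Finset ℕ) (n : ℕ), ∃ s ∈ S n, ∀ x ∈ s, ∀ i < n,
      if i ∈ P then f i x < a else b < f i x := by
    intro P n
    induction n with
    | zero => exact h₀.imp fun s hs => ⟨hs, by simp⟩
    | succ n ih =>
      obtain ⟨s, hs, hsx⟩ := ih
      by_cases hn : n ∈ P
      · refine ⟨s ∩ {x | f n x < a}, hsplit n (.inl ⟨s, hs, rfl⟩), fun x hx i hi => ?_⟩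
        obtain hi | rfl := Nat.lt_succ_iff_lt_or_eq.1 hi
        exacts [hsx x hx.1 i hi, by simpa [hn] using hx.2]
      · refine ⟨s ∩ {x | b < f n x}, hsplit n (.inr ⟨s, hs, rfl⟩), fun x hx i hi => ?_⟩
        obtain hi | rfl := Nat.lt_succ_iff_lt_or_eq.1 hi
        exacts [hsx x hx.1 i hi, by simpa [hn] using hx.2]
  refine ⟨a, b, hab, fun P M hPM => ?_⟩
  obtain ⟨N, hN⟩ := (P ∪ M).exists_nat_subset_range
  obtain ⟨s, hs, hsx⟩ := hpattern P N
  obtain ⟨x, hx⟩ := hne N s hs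
  have hlt : ∀ n ∈ P ∪ M, n < N := fun n hn => Finset.mem_range.1 (hN hn)
  refine ⟨x, Set.mem_iInter₂.2 fun n hn => ?_, Set.mem_iInter₂.2 fun n hn => ?_⟩
  · simpa [hn] using hsx x hx n (hlt n (Finset.mem_union_left _ hn))
  · simpa [Finset.disjoint_right.1 hPM hn] using hsx x hx n (hlt n (Finset.mem_union_right _ hn))

-- Start from the whole space and let a function crossing `[a, b]` on the trace on `A` of every
-- open set found so far split each of them in two; the functions used are independent.
lemma not_isTame_of_forall_finite_exists_crosses [TopologicalSpace Z] {F : Set (Z → ℝ)}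
    (hF : ∀ f ∈ F, Continuous f) {A : Set Z} (hA : A.Nonempty) (hab : a < b)
    (hcross : ∀ S : Set (Set Z), S.Finite → (∀ O ∈ S, IsOpen O ∧ (O ∩ A).Nonempty) →
      ∃ f ∈ F, ∀ O ∈ S, Crosses f a b (O ∩ A)) :
    ¬ IsTame F := by
  let State := {S : Set (Set Z) // S.Finite ∧ ∀ O ∈ S, IsOpen O ∧ (O ∩ A).Nonempty}
  choose f hfF hf using fun S : State => hcross S.1 S.2.1 S.2.2
  have hsplit : ∀ S : State, (splitFamily (f S) a b S.1).Finite ∧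
      ∀ O ∈ splitFamily (f S) a b S.1, IsOpen O ∧ (O ∩ A).Nonempty := by
    refine fun S => ⟨(S.2.1.image _).union (S.2.1.image _), ?_⟩
    rintro _ (⟨O, hO, rfl⟩ | ⟨O, hO, rfl⟩)
    · obtain ⟨x, hx, hxa⟩ := (hf S O hO).1
      exact ⟨(S.2.2 O hO).1.inter (isOpen_lt (hF _ (hfF S)) continuous_const),
        x, ⟨hx.1, hxa⟩, hx.2⟩
    · obtain ⟨x, hx, hbx⟩ := (hf S O hO).2
      exact ⟨(S.2.2 O hO).1.inter (isOpen_lt continuous_const (hF _ (hfF S))),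
        x, ⟨hx.1, hbx⟩, hx.2⟩
  let next (S : State) : State := ⟨splitFamily (f S) a b S.1, hsplit S⟩
  let start : State := ⟨{Set.univ}, Set.finite_singleton _, by simpa using hA⟩
  let S (n : ℕ) : State := next^[n] start
  have hS : ∀ n, S (n + 1) = next (S n) := fun n => Function.iterate_succ_apply' next n start
  refine fun htame => htame ⟨fun n => f (S n), fun n => hfF _,
    isIndependentSeq_of_splitFamily_subset (S := fun n => (S n).1) hab
      (Set.singleton_nonempty _) (fun n O hO => ((S n).2.2 O hO).2.left) fun n => ?_⟩
  exact (congrArg Subtype.val (hS n)).ge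

end Independence

section Fragmentation

variable {X ι : Type*} [TopologicalSpace X]

lemma IsFragmentedFamilyR.comp_continuous {Y : Type*} [TopologicalSpace Y] {F : Set (Y → ℝ)}
    (hF : IsFragmentedFamilyR F) {e : X → Y} (he : Continuous e) :
    IsFragmentedFamilyR ((· ∘ e) '' F) := by
  intro A hA ε hε
  obtain ⟨O, hO, ⟨_, hxO, x, hxA, rfl⟩, hosc⟩ := hF (e '' A) (hA.image e) ε hε
  refine ⟨e ⁻¹' O, hO.preimage he, ⟨x, hxO, hxA⟩, ?_⟩
  rintro _ ⟨f, hf, rfl⟩ y ⟨hyO, hyA⟩ z ⟨hzO, hzA⟩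
  exact hosc f hf _ ⟨hyO, y, hyA, rfl⟩ _ ⟨hzO, z, hzA, rfl⟩

lemma exists_isOpen_inter_nonempty_eventually_not_crosses {f : ι → X → ℝ} {l : Filter ι}
    {T : Finset (ℚ × ℚ)}
    (h : ∀ q ∈ T, ∀ A : Set X, A.Nonempty → ∃ O, IsOpen O ∧ (O ∩ A).Nonempty ∧
      ∀ᶠ i in l, ¬ Crosses (f i) q.1 q.2 (O ∩ A))
    {A : Set X} (hA : A.Nonempty) :
    ∃ O, IsOpen O ∧ (O ∩ A).Nonempty ∧ ∀ q ∈ T, ∀ᶠ i in l, ¬ Crosses (f i) q.1 q.2 (O ∩ A) := by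
  classical
  induction T using Finset.induction_on with
  | empty => exact ⟨Set.univ, isOpen_univ, by simpa using hA, by simp⟩
  | insert q T _ ih =>
    obtain ⟨O, hO, hOA, hOT⟩ := ih fun p hp => h p (Finset.mem_insert_of_mem hp)
    obtain ⟨V, hV, hVOA, hVq⟩ := h q (Finset.mem_insert_self q T) (O ∩ A) hOA
    rw [← Set.inter_assoc] at hVOA hVq
    refine ⟨V ∩ O, hV.inter hO, hVOA, (Finset.forall_mem_insert _ _ _).2 ⟨hVq, fun p hp => ?_⟩⟩
    have hsub : V ∩ O ∩ A ⊆ O ∩ A := Set.inter_subset_inter_left A Set.inter_subset_right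
    exact (hOT p hp).mono fun i hi hcross => hi (hcross.mono hsub)

lemma exists_isOpen_eventually_abs_sub_le {f : ι → X → ℝ} {l : Filter ι} {C : ℝ}
    (hC : ∀ i x, |f i x| ≤ C)
    (h : ∀ a b : ℚ, a < b → ∀ A : Set X, A.Nonempty → ∃ O, IsOpen O ∧ (O ∩ A).Nonempty ∧
      ∀ᶠ i in l, ¬ Crosses (f i) a b (O ∩ A))
    {A : Set X} (hA : A.Nonempty) {ε : ℝ} (hε : 0 < ε) :
    ∃ O, IsOpen O ∧ (O ∩ A).Nonempty ∧
      ∀ᶠ i in l, ∀ x ∈ O ∩ A, ∀ y ∈ O ∩ A, |f i x - f i y| ≤ ε := by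
  obtain ⟨T, hT, hosc⟩ := exists_finset_rat_abs_sub_le_of_not_crosses (Z := X) C hε
  obtain ⟨O, hO, hOA, hOT⟩ := exists_isOpen_inter_nonempty_eventually_not_crosses
    (fun q hq => h q.1 q.2 (hT q hq)) hA
  refine ⟨O, hO, hOA, ?_⟩
  filter_upwards [(Filter.eventually_all_finset T).2 hOT] with i hi
  exact hosc (f i) (O ∩ A) (hC i) hi

lemma isFragmentedFamilyR_range_of_eventually {f : ℕ → X → ℝ} (hf : ∀ n, Continuous (f n))
    (h : ∀ A : Set X, A.Nonempty → ∀ ε : ℝ, 0 < ε → ∃ O, IsOpen O ∧ (O ∩ A).Nonempty ∧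
      ∀ᶠ n in atTop, ∀ x ∈ O ∩ A, ∀ y ∈ O ∩ A, |f n x - f n y| ≤ ε) :
    IsFragmentedFamilyR (Set.range f) := by
  intro A hA ε hε
  obtain ⟨O, hO, ⟨x, hxO, hxA⟩, hosc⟩ := h A hA ε hε
  obtain ⟨N, hN⟩ := eventually_atTop.1 hosc
  let V : Set X := ⋂ n ∈ Set.Iio N, f n ⁻¹' Metric.ball (f n x) (ε / 2)
  have hV : IsOpen V :=
    (Set.finite_Iio N).isOpen_biInter fun n _ => Metric.isOpen_ball.preimage (hf n)
  have hxV : x ∈ V := Set.mem_iInter₂.2 fun n _ => Metric.mem_ball_self (half_pos hε)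
  refine ⟨O ∩ V, hO.inter hV, ⟨x, ⟨hxO, hxV⟩, hxA⟩, ?_⟩
  rintro _ ⟨n, rfl⟩ y ⟨⟨hyO, hyV⟩, hyA⟩ z ⟨⟨hzO, hzV⟩, hzA⟩
  obtain hn | hn := le_or_gt N n
  · exact hN n hn y ⟨hyO, hyA⟩ z ⟨hzO, hzA⟩
  · have hy : dist (f n y) (f n x) < ε / 2 := Set.mem_iInter₂.1 hyV n hn
    have hz : dist (f n z) (f n x) < ε / 2 := Set.mem_iInter₂.1 hzV n hn
    rw [← Real.dist_eq]
    linarith [dist_triangle_right (f n y) (f n z) (f n x)]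

lemma IsTame.isFragmentedFn_of_mem_closure {F : Set (X → ℝ)} (hF : IsTame F)
    (hcont : ∀ f ∈ F, Continuous f) {C : ℝ} (hC : ∀ f ∈ F, ∀ x, |f x| ≤ C) {g : X → ℝ}
    (hg : g ∈ closure F) : IsFragmentedFn g := by
  have hgC : ∀ x, |g x| ≤ C := fun x =>
    closure_minimal (fun f hf => hC f hf x)
      (isClosed_le (continuous_apply x).abs continuous_const) hg
  have hcross : ∀ a b : ℚ, a < b → ∀ A : Set X, A.Nonempty → ∃ O, IsOpen O ∧ (O ∩ A).Nonempty ∧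
      ¬ Crosses g a b (O ∩ A) := by
    intro a b hab A hA
    by_contra! hgA
    refine not_isTame_of_forall_finite_exists_crosses hcont hA (Rat.cast_lt.2 hab)
      (fun S hS hSA => ?_) hF
    simpa using exists_mem_crosses_of_mem_closure hg (hS.image (· ∩ A))
      (Set.forall_mem_image.2 fun O hO => hgA O (hSA O hO).1 (hSA O hO).2)
  intro A hA ε hε
  simpa using exists_isOpen_eventually_abs_sub_le (l := pure ()) (f := fun _ => g)
    (fun _ => hgC) (by simpa using hcross) hA hε

end Fragmentation

lemma exists_countablyGenerated_le_forall {α ι : Type*} [Countable ι] {Q : ι → Filter α → Prop}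
    (hQ : ∀ i, Antitone (Q i))
    (hdense : ∀ i (l : Filter α), l.NeBot → l.IsCountablyGenerated →
      ∃ l' ≤ l, l'.NeBot ∧ l'.IsCountablyGenerated ∧ Q i l')
    (l : Filter α) [hl : l.NeBot] [hlc : l.IsCountablyGenerated] :
    ∃ l' ≤ l, l'.NeBot ∧ l'.IsCountablyGenerated ∧ ∀ i, Q i l' := by
  cases isEmpty_or_nonempty ι with
  | inl _ => exact ⟨l, le_rfl, hl, hlc, isEmptyElim⟩
  | inr _ =>
    obtain ⟨e, he⟩ := exists_surjective_nat ι
    let State := {l : Filter α // l.NeBot ∧ l.IsCountablyGenerated}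
    choose next hle hne hcg hnext using fun n (l : State) => hdense (e n) l.1 l.2.1 l.2.2
    let m (n : ℕ) : State := Nat.rec ⟨l, hl, hlc⟩ (fun n l => ⟨next n l, hne n l, hcg n l⟩) n
    have hanti : Antitone fun n => (m n).1 := antitone_nat_of_succ_le fun n => hle n (m n)
    have hmne : ∀ n, (m n).1.NeBot := fun n => (m n).2.1
    have hmcg : ∀ n, (m n).1.IsCountablyGenerated := fun n => (m n).2.2
    refine ⟨⨅ n, (m n).1, iInf_le _ 0, iInf_neBot_of_directed' hanti.directed_ge hmne,
      inferInstance, fun i => ?_⟩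
    obtain ⟨n, rfl⟩ := he i
    exact hQ _ (iInf_le _ (n + 1)) (hnext n (m n))

lemma exists_countablyGenerated_le_forall_subset_closure {α X : Type*} [TopologicalSpace X]
    [SecondCountableTopology X] {K : Filter α → Set X} (hK : Monotone K)
    (l : Filter α) [l.NeBot] [l.IsCountablyGenerated] :
    ∃ m ≤ l, m.NeBot ∧ m.IsCountablyGenerated ∧
      ∀ m' ≤ m, m'.NeBot → m'.IsCountablyGenerated → K m ⊆ closure (K m') := by
  let Q (B : TopologicalSpace.countableBasis X) (m : Filter α) : Prop :=
    Disjoint (K m) B ∨ ∀ m' ≤ m, m'.NeBot → m'.IsCountablyGenerated → ¬ Disjoint (K m') B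
  have hQ : ∀ B, Antitone (Q B) := fun B m' m hm => Or.imp (fun h => h.mono_left (hK hm))
    fun h k hk => h k (hk.trans hm)
  have hdense : ∀ B (m : Filter α), m.NeBot → m.IsCountablyGenerated →
      ∃ m' ≤ m, m'.NeBot ∧ m'.IsCountablyGenerated ∧ Q B m' := by
    intro B m hne hcg
    by_cases h : ∀ m' ≤ m, m'.NeBot → m'.IsCountablyGenerated → ¬ Disjoint (K m') B
    · exact ⟨m, le_rfl, hne, hcg, .inr h⟩
    · push Not at h
      obtain ⟨m', hle, hne', hcg', hdisj⟩ := h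
      exact ⟨m', hle, hne', hcg', .inl hdisj⟩
  obtain ⟨m, hm, hne, hcg, hmQ⟩ := exists_countablyGenerated_le_forall hQ hdense l
  refine ⟨m, hm, hne, hcg, fun m' hm' hne' hcg' x hx => ?_⟩
  refine (TopologicalSpace.isBasis_countableBasis X).mem_closure_iff.2 fun B hB hxB => ?_
  have hmeet : ¬ Disjoint (K m) B := Set.not_disjoint_iff.2 ⟨x, hx, hxB⟩
  rw [Set.inter_comm, ← Set.not_disjoint_iff_nonempty_inter]
  exact (hmQ ⟨B, hB⟩).resolve_left hmeet m' hm' hne' hcg'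

section SecondCountable

variable {X ι : Type*} [TopologicalSpace X] {f : ι → X → ℝ} {l m : Filter ι} {a b : ℝ}

/-- The largest set `A` such that on each nonempty relatively open subset of `A` frequently many
of the `f i` cross `[a, b]`; the family is fragmented along `l` at the scale `[a, b]` exactly
when it is empty. -/
def crossingKernel (f : ι → X → ℝ) (l : Filter ι) (a b : ℝ) : Set X :=
  ⋃₀ {A | ∀ O, IsOpen O → (O ∩ A).Nonempty → ∃ᶠ i in l, Crosses (f i) a b (O ∩ A)}

lemma monotone_crossingKernel (f : ι → X → ℝ) (a b : ℝ) :
    Monotone fun l => crossingKernel f l a b := fun _ _ hle =>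
  Set.sUnion_subset_sUnion fun _ hA O hO hOA => (hA O hO hOA).filter_mono hle

lemma frequently_crosses_inter_crossingKernel {O : Set X} (hO : IsOpen O)
    (hne : (O ∩ crossingKernel f l a b).Nonempty) :
    ∃ᶠ i in l, Crosses (f i) a b (O ∩ crossingKernel f l a b) := by
  obtain ⟨x, hxO, A, hA, hxA⟩ := hne
  exact (hA O hO ⟨x, hxO, hxA⟩).mono fun i hi =>
    hi.mono (Set.inter_subset_inter_right O (Set.subset_sUnion_of_mem hA))

lemma exists_isOpen_eventually_not_crosses_of_crossingKernel_eq_empty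
    (h : crossingKernel f l a b = ∅) {A : Set X} (hA : A.Nonempty) :
    ∃ O, IsOpen O ∧ (O ∩ A).Nonempty ∧ ∀ᶠ i in l, ¬ Crosses (f i) a b (O ∩ A) := by
  by_contra! hcross
  obtain ⟨x, hx⟩ := hA
  exact (h ▸ Set.notMem_empty x : x ∉ crossingKernel f l a b)
    ⟨A, fun O hO hOA => hcross O hO hOA, hx⟩

lemma eventually_crosses_inter_crossingKernel [m.IsCountablyGenerated]
    (hstable : ∀ m' ≤ m, m'.NeBot → m'.IsCountablyGenerated →
      crossingKernel f m a b ⊆ closure (crossingKernel f m' a b))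
    {O : Set X} (hO : IsOpen O) (hne : (O ∩ crossingKernel f m a b).Nonempty) :
    ∀ᶠ i in m, Crosses (f i) a b (O ∩ crossingKernel f m a b) := by
  by_contra hnot
  let m' := m ⊓ 𝓟 {i | ¬ Crosses (f i) a b (O ∩ crossingKernel f m a b)}
  have hm'ne : m'.NeBot := Filter.frequently_iff_neBot.1 (Filter.not_eventually.1 hnot)
  obtain ⟨x, hxO, hx⟩ := hne
  have hmeet : (O ∩ crossingKernel f m' a b).Nonempty :=
    mem_closure_iff.1 (hstable m' inf_le_left hm'ne inferInstance hx) O hO hxO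
  have hnotcross : ∀ᶠ i in m', ¬ Crosses (f i) a b (O ∩ crossingKernel f m a b) :=
    Filter.mem_inf_of_right (Filter.mem_principal_self _)
  obtain ⟨i, hi, hi'⟩ :=
    ((frequently_crosses_inter_crossingKernel hO hmeet).and_eventually hnotcross).exists
  exact hi' (hi.mono (Set.inter_subset_inter_right O (monotone_crossingKernel f a b inf_le_left)))

lemma IsTame.exists_crossingKernel_eq_empty [SecondCountableTopology X]
    (htame : IsTame (Set.range f)) (hf : ∀ i, Continuous (f i)) (hab : a < b)
    (l : Filter ι) [l.NeBot] [l.IsCountablyGenerated] :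
    ∃ m ≤ l, m.NeBot ∧ m.IsCountablyGenerated ∧ crossingKernel f m a b = ∅ := by
  obtain ⟨m, hm, hne, hcg, hstable⟩ :=
    exists_countablyGenerated_le_forall_subset_closure (monotone_crossingKernel f a b) l
  refine ⟨m, hm, hne, hcg, Set.not_nonempty_iff_eq_empty.1 fun hker => ?_⟩
  refine not_isTame_of_forall_finite_exists_crosses (Set.forall_mem_range.2 hf) hker hab
    (fun S hS hSker => ?_) htame
  have hcross : ∀ᶠ i in m, ∀ O ∈ S, Crosses (f i) a b (O ∩ crossingKernel f m a b) :=
    (Filter.eventually_all_finite hS).2 fun O hO =>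
      eventually_crosses_inter_crossingKernel hstable (hSker O hO).1 (hSker O hO).2
  obtain ⟨i, hi⟩ := hcross.exists
  exact ⟨f i, Set.mem_range_self i, hi⟩

lemma IsTame.exists_isFragmentedFamilyR_subseq [SecondCountableTopology X] {f : ℕ → X → ℝ}
    (htame : IsTame (Set.range f)) (hf : ∀ n, Continuous (f n)) {C : ℝ}
    (hC : ∀ n x, |f n x| ≤ C) :
    ∃ φ : ℕ → ℕ, StrictMono φ ∧ IsFragmentedFamilyR (Set.range fun n => f (φ n)) := by
  let Q (q : {q : ℚ × ℚ // q.1 < q.2}) (l : Filter ℕ) : Prop := crossingKernel f l q.1.1 q.1.2 = ∅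
  have hQ : ∀ q, Antitone (Q q) := fun q _ _ hle hl =>
    Set.subset_empty_iff.1 ((monotone_crossingKernel f _ _ hle).trans hl.le)
  have hdense : ∀ q (l : Filter ℕ), l.NeBot → l.IsCountablyGenerated →
      ∃ l' ≤ l, l'.NeBot ∧ l'.IsCountablyGenerated ∧ Q q l' :=
    fun q l _ _ => htame.exists_crossingKernel_eq_empty hf (Rat.cast_lt.2 q.2) l
  obtain ⟨l, hl, hne, hcg, hker⟩ := exists_countablyGenerated_le_forall hQ hdense atTop
  obtain ⟨u, hu⟩ := l.exists_seq_tendsto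
  obtain ⟨ψ, hψ, huψ⟩ := strictMono_subseq_of_tendsto_atTop (hu.mono_right hl)
  refine ⟨u ∘ ψ, huψ, isFragmentedFamilyR_range_of_eventually (fun n => hf _)
    fun A hA ε hε => ?_⟩
  obtain ⟨O, hO, hOA, hosc⟩ := exists_isOpen_eventually_abs_sub_le hC (fun a b hab A hA =>
    exists_isOpen_eventually_not_crosses_of_crossingKernel_eq_empty (hker ⟨(a, b), hab⟩) hA) hA hε
  exact ⟨O, hO, hOA, (hu.comp hψ.tendsto_atTop).eventually hosc⟩

end SecondCountable

section Subsequences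

variable {X : Type*} [TopologicalSpace X]

lemma IsFragmentedFamilyR.exists_countable_net [HereditarilyLindelofSpace X] {F : Set (X → ℝ)}
    (hF : IsFragmentedFamilyR F) {ε : ℝ} (hε : 0 < ε) :
    ∃ D : Set X, D.Countable ∧ ∀ x, ∃ d ∈ D, ∀ f ∈ F, |f x - f d| ≤ ε := by
  let HasNet (s : Set X) : Prop := ∃ D : Set X, D.Countable ∧ ∀ x ∈ s, ∃ d ∈ D, ∀ f ∈ F,
    |f x - f d| ≤ ε
  have hmono : ∀ ⦃s t⦄, s ⊆ t → HasNet t → HasNet s := fun s t hst ⟨D, hD, ht⟩ =>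
    ⟨D, hD, fun x hx => ht x (hst hx)⟩
  have hunion : ∀ S : Set (Set X), S.Countable → (∀ s ∈ S, HasNet s) → HasNet (⋃₀ S) := by
    intro S hS hnet
    choose! D hD hDnet using hnet
    refine ⟨⋃ s ∈ S, D s, hS.biUnion hD, ?_⟩
    rintro x ⟨s, hs, hxs⟩
    obtain ⟨d, hd, hdx⟩ := hDnet s hs x hxs
    exact ⟨d, Set.mem_iUnion₂.2 ⟨s, hs, hd⟩, hdx⟩
  let U : Set X := ⋃₀ {V | IsOpen V ∧ HasNet V}
  obtain ⟨D, hD, hDU⟩ : HasNet U := by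
    refine (HereditarilyLindelofSpace.isLindelof U).induction_on hmono hunion ?_
    rintro x ⟨V, hV, hxV⟩
    exact ⟨V, mem_nhdsWithin_of_mem_nhds (hV.1.mem_nhds hxV), hV.2⟩
  suffices hU : U = Set.univ from ⟨D, hD, fun x => hDU x (hU ▸ Set.mem_univ x)⟩
  by_contra hU
  obtain ⟨O, hO, ⟨d, hdO, hdU⟩, hosc⟩ := hF Uᶜ (Set.nonempty_compl.2 hU) ε hε
  refine hdU ⟨O, ⟨hO, insert d D, hD.insert d, fun x hx => ?_⟩, hdO⟩
  by_cases hxU : x ∈ U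
  · exact (hDU x hxU).imp fun _ h => ⟨Set.mem_insert_of_mem _ h.1, h.2⟩
  · exact ⟨d, Set.mem_insert d D, fun f hf => hosc f hf x ⟨hx, hxU⟩ d ⟨hdO, hdU⟩⟩

lemma exists_subseq_forall_mem_tendsto {Z : Type*} {f : ℕ → Z → ℝ} {C : ℝ}
    (hC : ∀ n z, |f n z| ≤ C) {D : Set Z} (hD : D.Countable) :
    ∃ φ : ℕ → ℕ, StrictMono φ ∧ ∀ d ∈ D, ∃ y, Tendsto (fun n => f (φ n) d) atTop (𝓝 y) := by
  have := hD.to_subtype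
  have hK : IsCompact (Set.univ.pi fun _ : D => Set.Icc (-C) C) :=
    isCompact_univ_pi fun _ => isCompact_Icc
  obtain ⟨y, -, φ, hφ, hy⟩ :=
    hK.tendsto_subseq (x := fun n (d : D) => f n d) fun n d _ => abs_le.1 (hC n d)
  exact ⟨φ, hφ, fun d hd => ⟨y ⟨d, hd⟩, tendsto_pi_nhds.1 hy ⟨d, hd⟩⟩⟩

lemma IsFragmentedFamilyR.exists_subseq_tendsto [HereditarilyLindelofSpace X] {f : ℕ → X → ℝ}
    (hf : IsFragmentedFamilyR (Set.range f)) {C : ℝ} (hC : ∀ n x, |f n x| ≤ C) :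
    ∃ φ : ℕ → ℕ, StrictMono φ ∧ ∀ x, ∃ y, Tendsto (fun n => f (φ n) x) atTop (𝓝 y) := by
  choose D hD hnet using fun k : ℕ =>
    hf.exists_countable_net (ε := 1 / ((k : ℝ) + 1)) Nat.one_div_pos_of_nat
  obtain ⟨φ, hφ, hconv⟩ := exists_subseq_forall_mem_tendsto hC (Set.countable_iUnion hD)
  refine ⟨φ, hφ, fun x => cauchySeq_tendsto_of_complete (Metric.cauchySeq_iff.2 fun ε hε => ?_)⟩
  obtain ⟨k, hk⟩ := exists_nat_one_div_lt (show 0 < ε / 3 by linarith)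
  obtain ⟨d, hd, hxd⟩ := hnet k x
  obtain ⟨y, hy⟩ := hconv d (Set.mem_iUnion.2 ⟨k, hd⟩)
  obtain ⟨N, hN⟩ := Metric.cauchySeq_iff.1 hy.cauchySeq (ε / 3) (by linarith)
  have hnear : ∀ n, dist (f (φ n) x) (f (φ n) d) < ε / 3 := fun n =>
    (hxd _ (Set.mem_range_self _)).trans_lt hk
  refine ⟨N, fun i hi j hj => ?_⟩
  calc dist (f (φ i) x) (f (φ j) x)
      ≤ dist (f (φ i) x) (f (φ i) d) + dist (f (φ i) d) (f (φ j) d)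
          + dist (f (φ j) d) (f (φ j) x) := dist_triangle4 _ _ _ _
    _ < ε / 3 + ε / 3 + ε / 3 :=
        add_lt_add (add_lt_add (hnear i) (hN i hi j hj)) (dist_comm (f (φ j) x) _ ▸ hnear j)
    _ = ε := add_thirds ε

lemma IsTame.of_comp_surjective {Z W : Type*} {F : Set (W → ℝ)} {π : Z → W}
    (hπ : π.Surjective) (hF : IsTame ((· ∘ π) '' F)) : IsTame F := by
  rintro ⟨f, hfF, a, b, hab, hind⟩
  refine hF ⟨fun n => f n ∘ π, fun n => ⟨f n, hfF n, rfl⟩, a, b, hab, fun P M hPM => ?_⟩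
  obtain ⟨w, hwP, hwM⟩ := hind P M hPM
  obtain ⟨z, rfl⟩ := hπ w
  simp only [Set.mem_iInter] at hwP hwM
  exact ⟨z, Set.mem_iInter₂.2 hwP, Set.mem_iInter₂.2 hwM⟩

lemma IsTame.mono {Z : Type*} {F G : Set (Z → ℝ)} (hFG : F ⊆ G) (hG : IsTame G) : IsTame F :=
  fun ⟨f, hfF, hf⟩ => hG ⟨f, fun n => hFG (hfF n), hf⟩

-- Only the image of `X` in `ℕ → ℝ` under `x ↦ (f n x)ₙ` matters, and it is second countable.
lemma IsTame.exists_subseq_isFragmentedFamilyR_and_tendsto {F : Set (X → ℝ)} (hF : IsTame F)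
    {f : ℕ → X → ℝ} (hfF : ∀ n, f n ∈ F) (hf : ∀ n, Continuous (f n)) {C : ℝ}
    (hC : ∀ n x, |f n x| ≤ C) :
    ∃ (φ : ℕ → ℕ) (g : X → ℝ), StrictMono φ ∧ IsFragmentedFamilyR (Set.range fun n => f (φ n)) ∧
      ∀ x, Tendsto (fun n => f (φ n) x) atTop (𝓝 (g x)) := by
  let π : X → Set.range (fun x n => f n x) := Set.rangeFactorization _
  let p (n : ℕ) (w : Set.range fun x n => f n x) : ℝ := w.1 n
  have hπ : Continuous π := (continuous_pi hf).subtype_mk _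
  have hp : ∀ n, Continuous (p n) := fun n => (continuous_apply n).comp continuous_subtype_val
  have hpC : ∀ n w, |p n w| ≤ C := by
    rintro n ⟨_, x, rfl⟩
    exact hC n x
  have hptame : IsTame (Set.range p) :=
    .of_comp_surjective Set.rangeFactorization_surjective
      (hF.mono (Set.image_subset_iff.2 (Set.range_subset_iff.2 hfF)))
  obtain ⟨φ, hφ, hfrag⟩ := hptame.exists_isFragmentedFamilyR_subseq hp hpC
  obtain ⟨ψ, hψ, hlim⟩ := hfrag.exists_subseq_tendsto fun n => hpC (φ n)
  choose g hg using hlim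
  refine ⟨φ ∘ ψ, g ∘ π, hφ.comp hψ, fun A hA ε hε => ?_, fun x => hg (π x)⟩
  obtain ⟨O, hO, hOA, hosc⟩ := hfrag.comp_continuous hπ A hA ε hε
  refine ⟨O, hO, hOA, ?_⟩
  rintro _ ⟨n, rfl⟩
  exact hosc _ ⟨_, ⟨ψ n, rfl⟩, rfl⟩

end Subsequences

section NotFragmented

universe u

lemma exists_nonempty_forall_interior_image_nonempty {Y Z : Type u} [TopologicalSpace Y]
    [CompactSpace Y] [TopologicalSpace Z] [T2Space Z] [Nonempty Z] {π : Y → Z} (hπ : Continuous π)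
    (hsurj : π.Surjective) :
    ∃ E : Set Y, E.Nonempty ∧
      ∀ O, IsOpen O → (O ∩ E).Nonempty → (interior (π '' (O ∩ E))).Nonempty := by
  obtain ⟨E, hE, hEsurj, hEmin⟩ := exists_compact_surjective_zorn_subset hπ hsurj
  refine ⟨E, Set.image_nonempty.1 (hEsurj ▸ Set.univ_nonempty), fun O hO ⟨x, hxO, hxE⟩ => ?_⟩
  let R : Set E := Subtype.val ⁻¹' Oᶜ
  have hR : IsClosed R := hO.isClosed_compl.preimage continuous_subtype_val
  have himage : IsClosed (E.domRestrict π '' R) :=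
    (hR.isCompact.image (hπ.comp continuous_subtype_val)).isClosed
  have hproper : (E.domRestrict π '' R)ᶜ.Nonempty :=
    Set.nonempty_compl.2 (hEmin R (fun h => (h ▸ Set.mem_univ (⟨x, hxE⟩ : E) : _ ∈ R) hxO) hR)
  refine hproper.mono (interior_maximal (fun z hz => ?_) himage.isOpen_compl)
  obtain ⟨y, hyE, rfl⟩ := hEsurj.ge (Set.mem_univ z)
  by_contra hy
  exact hz ⟨⟨y, hyE⟩, fun hyO => hy ⟨y, ⟨hyO, hyE⟩, rfl⟩, rfl⟩

lemma exists_mem_eventually_eq_of_isOpen {α : Type*} [TopologicalSpace α] {U : Set (ℕ → α)}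
    (hU : IsOpen U) (hne : U.Nonempty) (c : α) : ∃ τ ∈ U, ∀ᶠ n in atTop, τ n = c := by
  classical
  obtain ⟨σ, hσ⟩ := hne
  let τ (N n : ℕ) : α := if n < N then σ n else c
  have hτ : Tendsto τ atTop (𝓝 σ) := tendsto_pi_nhds.2 fun n =>
    tendsto_const_nhds.congr' ((eventually_gt_atTop n).mono fun N hN => (if_pos hN).symm)
  obtain ⟨N, hN⟩ := (hτ.eventually (hU.mem_nhds hσ)).exists
  exact ⟨τ N, hN, (eventually_ge_atTop N).mono fun n hn => if_neg hn.not_gt⟩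

variable {X : Type u} [TopologicalSpace X] {f : ℕ → X → ℝ} {a b : ℝ}

/-- The pairs of a point `x` and a pattern `σ` such that `b ≤ f n x` whenever `σ n` is true and
`f n x ≤ a` whenever it is false. `Bool` is lifted to the universe of `X`, as
`exists_compact_surjective_zorn_subset` relates spaces of one universe only. -/
def patternGraph (f : ℕ → X → ℝ) (a b : ℝ) : Set (X × (ℕ → ULift.{u} Bool)) :=
  {p | ∀ n, ((p.2 n).down = true → b ≤ f n p.1) ∧ ((p.2 n).down = false → f n p.1 ≤ a)}

lemma isClosed_patternGraph (hf : ∀ n, Continuous (f n)) (a b : ℝ) :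
    IsClosed (patternGraph f a b) := by
  have hopen : ∀ n c, IsOpen {p : X × (ℕ → ULift.{u} Bool) | (p.2 n).down = c} := fun n c =>
    (isOpen_discrete {c}).preimage (continuous_uliftDown.comp (by fun_prop))
  have hfst : ∀ n, Continuous fun p : X × (ℕ → ULift.{u} Bool) => f n p.1 := fun n =>
    (hf n).comp continuous_fst
  rw [patternGraph, Set.ofPred_forall]
  exact isClosed_iInter fun n =>
    (isClosed_imp (hopen n true) (isClosed_le continuous_const (hfst n))).inter
      (isClosed_imp (hopen n false) (isClosed_le (hfst n) continuous_const))

lemma exists_mem_patternGraph [CompactSpace X] (hf : ∀ n, Continuous (f n))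
    (hfin : ∀ P M : Finset ℕ, Disjoint P M →
      ((⋂ n ∈ P, {x | f n x < a}) ∩ ⋂ n ∈ M, {x | b < f n x}).Nonempty)
    (σ : ℕ → ULift.{u} Bool) : ∃ x, (x, σ) ∈ patternGraph f a b := by
  let K (n : ℕ) : Set X := {x | ((σ n).down = true → b ≤ f n x) ∧ ((σ n).down = false → f n x ≤ a)}
  have hK : ∀ n, IsClosed (K n) := fun n =>
    (isClosed_imp isOpen_const (isClosed_le continuous_const (hf n))).inter
      (isClosed_imp isOpen_const (isClosed_le (hf n) continuous_const))
  have hfinK : ∀ s : Finset ℕ, (Set.univ ∩ ⋂ n ∈ s, K n).Nonempty := by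
    intro s
    obtain ⟨x, hxP, hxM⟩ := hfin (s.filter fun n => (σ n).down = false)
      (s.filter fun n => ¬ (σ n).down = false)
      (Finset.disjoint_filter_filter_not s s _)
    simp only [Set.mem_iInter, Finset.mem_filter, Bool.not_eq_false, and_imp] at hxP hxM
    exact ⟨x, Set.mem_univ x, Set.mem_iInter₂.2 fun n hn =>
      ⟨fun hσ => (hxM n hn hσ).le, fun hσ => (hxP n hn hσ).le⟩⟩
  obtain ⟨x, -, hx⟩ := isCompact_univ.inter_iInter_nonempty K hK hfinK
  exact ⟨x, Set.mem_iInter.1 hx⟩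

variable [CompactSpace X]

-- A minimal closed set projecting onto the Cantor space of patterns is projected by its open
-- pieces onto sets with interior, and these contain patterns of either eventually constant value.
lemma IsIndependentSeq.exists_nonempty_forall_isOpen (hind : IsIndependentSeq f)
    (hf : ∀ n, Continuous (f n)) :
    ∃ a b : ℝ, a < b ∧ ∃ A : Set X, A.Nonempty ∧ ∀ O, IsOpen O → (O ∩ A).Nonempty →
      (∃ x ∈ O ∩ A, ∀ᶠ n in atTop, f n x ≤ a) ∧ ∃ x ∈ O ∩ A, ∀ᶠ n in atTop, b ≤ f n x := by
  obtain ⟨a, b, hab, hfin⟩ := hind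
  have : CompactSpace (patternGraph f a b) :=
    isCompact_iff_compactSpace.1 (isClosed_patternGraph hf a b).isCompact
  let π (p : patternGraph f a b) : ℕ → ULift.{u} Bool := p.1.2
  have hsurj : π.Surjective := fun σ =>
    (exists_mem_patternGraph hf hfin σ).elim fun x hx => ⟨⟨(x, σ), hx⟩, rfl⟩
  obtain ⟨E, hE, hinterior⟩ := exists_nonempty_forall_interior_image_nonempty
    (continuous_snd.comp continuous_subtype_val : Continuous π) hsurj
  let pt (p : patternGraph f a b) : X := p.1.1
  have hpt : Continuous pt := continuous_fst.comp continuous_subtype_val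
  refine ⟨a, b, hab, pt '' E, hE.image pt, fun O hO hOE => ?_⟩
  have hOE' : (pt ⁻¹' O ∩ E).Nonempty := by
    obtain ⟨_, hpO, p, hpE, rfl⟩ := hOE
    exact ⟨p, hpO, hpE⟩
  have hconst : ∀ c : Bool, ∃ p ∈ pt ⁻¹' O ∩ E, ∀ᶠ n in atTop, (π p n).down = c := fun c => by
    obtain ⟨_, hτ, hτc⟩ := exists_mem_eventually_eq_of_isOpen isOpen_interior
      (hinterior (pt ⁻¹' O) (hO.preimage hpt) hOE') (ULift.up c)
    obtain ⟨p, hp, rfl⟩ := interior_subset hτ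
    exact ⟨p, hp, hτc.mono fun n hn => congrArg ULift.down hn⟩
  obtain ⟨p, hp, hpa⟩ := hconst false
  obtain ⟨q, hq, hqb⟩ := hconst true
  exact ⟨⟨pt p, ⟨hp.1, Set.mem_image_of_mem pt hp.2⟩, hpa.mono fun n hn => (p.2 n).2 hn⟩,
    pt q, ⟨hq.1, Set.mem_image_of_mem pt hq.2⟩, hqb.mono fun n hn => (q.2 n).1 hn⟩

lemma IsIndependentSeq.not_isFragmentedFamilyR_subseq (hind : IsIndependentSeq f)
    (hf : ∀ n, Continuous (f n)) {φ : ℕ → ℕ} (hφ : StrictMono φ) :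
    ¬ IsFragmentedFamilyR (Set.range fun n => f (φ n)) := by
  intro hfrag
  obtain ⟨a, b, hab, A, hA, hosc⟩ := hind.exists_nonempty_forall_isOpen hf
  obtain ⟨O, hO, hOA, hsmall⟩ := hfrag A hA ((b - a) / 2) (by linarith)
  obtain ⟨⟨x, hx, hxa⟩, y, hy, hyb⟩ := hosc O hO hOA
  obtain ⟨n, hxn, hyn⟩ := (hφ.tendsto_atTop.eventually (hxa.and hyb)).exists
  linarith [neg_abs_le (f (φ n) x - f (φ n) y), hsmall _ ⟨n, rfl⟩ x hx y hy]

lemma exists_mem_closure_tendsto_hyperfilter {Z : Type*} {f : ℕ → Z → ℝ} {F : Set (Z → ℝ)}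
    (hfF : ∀ n, f n ∈ F) {C : ℝ} (hC : ∀ n z, |f n z| ≤ C) :
    ∃ g ∈ closure F, ∀ z, Tendsto (fun n => f n z) (hyperfilter ℕ) (𝓝 (g z)) := by
  have hK : IsCompact (Set.univ.pi fun _ : Z => Set.Icc (-C) C) :=
    isCompact_univ_pi fun _ => isCompact_Icc
  obtain ⟨g, -, hg⟩ := hK.ultrafilter_le_nhds ((hyperfilter ℕ).map f)
    (le_principal_iff.2 (Ultrafilter.mem_map.2
      (Filter.univ_mem' fun n z _ => abs_le.1 (hC n z))))
  have hlim : Tendsto f (hyperfilter ℕ) (𝓝 g) := hg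
  exact ⟨g, mem_closure_of_tendsto hlim (.of_forall hfF), tendsto_pi_nhds.1 hlim⟩

lemma IsIndependentSeq.exists_mem_closure_not_isFragmentedFn (hind : IsIndependentSeq f)
    (hf : ∀ n, Continuous (f n)) {F : Set (X → ℝ)} (hfF : ∀ n, f n ∈ F) {C : ℝ}
    (hC : ∀ n x, |f n x| ≤ C) :
    ∃ g ∈ closure F, ¬ IsFragmentedFn g := by
  obtain ⟨g, hg, hlim⟩ := exists_mem_closure_tendsto_hyperfilter hfF hC
  refine ⟨g, hg, fun hfrag => ?_⟩
  obtain ⟨a, b, hab, A, hA, hosc⟩ := hind.exists_nonempty_forall_isOpen hf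
  obtain ⟨O, hO, hOA, hsmall⟩ := hfrag A hA ((b - a) / 2) (by linarith)
  obtain ⟨⟨x, hx, hxa⟩, y, hy, hyb⟩ := hosc O hO hOA
  have hgx : g x ≤ a := le_of_tendsto (hlim x) (Nat.hyperfilter_le_atTop hxa)
  have hgy : b ≤ g y := ge_of_tendsto (hlim y) (Nat.hyperfilter_le_atTop hyb)
  linarith [neg_abs_le (g x - g y), hsmall x hx y hy]

end NotFragmented

section L1Sequences

variable {Z : Type*} {f : ℕ → Z → ℝ}

lemma bddAbove_range_abs_sum_mul {C : ℝ} (hC : ∀ n z, |f n z| ≤ C) (s : Finset ℕ) (c : ℕ → ℝ) :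
    BddAbove (Set.range fun z => |∑ i ∈ s, c i * f i z|) := by
  refine ⟨∑ i ∈ s, |c i| * C, Set.forall_mem_range.2 fun z => ?_⟩
  refine (Finset.abs_sum_le_sum_abs _ _).trans (Finset.sum_le_sum fun i _ => ?_)
  exact (abs_mul _ _).trans_le (mul_le_mul_of_nonneg_left (hC i z) (abs_nonneg _))

lemma IsIndependentSeq.isL1Seq (hf : IsIndependentSeq f) {C : ℝ} (hC : ∀ n z, |f n z| ≤ C) :
    IsL1Seq f := by
  obtain ⟨a, b, hab, hfin⟩ := hf
  refine ⟨(b - a) / 2, by linarith, fun n c => ?_⟩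
  let P := (Finset.range n).filter fun i => 0 ≤ c i
  let N := (Finset.range n).filter fun i => ¬ 0 ≤ c i
  have hPN : Disjoint P N := Finset.disjoint_filter_filter_not _ _ _
  obtain ⟨y, hyN, hyP⟩ := hfin N P hPN.symm
  obtain ⟨z, hzP, hzN⟩ := hfin P N hPN
  simp only [Set.mem_iInter, Set.mem_ofPred_eq, P, N, Finset.mem_filter, and_imp]
    at hyN hyP hzP hzN
  have hterm : ∀ i ∈ Finset.range n, (b - a) * |c i| ≤ c i * f i y - c i * f i z := by
    intro i hi
    rw [← mul_sub]
    obtain hc | hc := le_or_gt 0 (c i)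
    · rw [abs_of_nonneg hc, mul_comm]
      exact mul_le_mul_of_nonneg_left (by linarith [hyP i hi hc, hzP i hi hc]) hc
    · rw [abs_of_neg hc, mul_neg, ← neg_mul, mul_comm]
      exact mul_le_mul_of_nonpos_left (by linarith [hyN i hi hc.not_ge, hzN i hi hc.not_ge]) hc.le
  have hle := le_ciSup (bddAbove_range_abs_sum_mul hC (Finset.range n) c)
  have hsum := Finset.sum_le_sum hterm
  rw [← Finset.mul_sum, Finset.sum_sub_distrib] at hsum
  linarith [hle y, hle z, le_abs_self (∑ i ∈ Finset.range n, c i * f i y),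
    neg_abs_le (∑ i ∈ Finset.range n, c i * f i z)]

lemma mul_sum_abs_le_iSup_of_injective {a : ℝ}
    (ha : ∀ (n : ℕ) (c : ℕ → ℝ),
      a * ∑ i ∈ Finset.range n, |c i| ≤ ⨆ z, |∑ i ∈ Finset.range n, c i * f i z|)
    {ι : Type*} {e : ι → ℕ} (he : e.Injective) (s : Finset ι) (c : ι → ℝ) :
    a * ∑ j ∈ s, |c j| ≤ ⨆ z, |∑ j ∈ s, c j * f (e j) z| := by
  classical
  obtain ⟨n, hn⟩ := (s.image e).exists_nat_subset_range
  let c' : ℕ → ℝ := Function.extend e (Set.indicator s c) 0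
  have hc' : ∀ j ∈ s, c' (e j) = c j := fun j hj => by simp [c', he.extend_apply, hj]
  have hc'0 : ∀ i ∉ s.image e, c' i = 0 := by
    intro i hi
    by_cases hie : ∃ j, e j = i
    · obtain ⟨j, rfl⟩ := hie
      have hj : j ∉ s := fun hj => hi (Finset.mem_image_of_mem e hj)
      simp [c', he.extend_apply, hj]
    · simp [c', Function.extend_apply' _ _ _ hie]
  have hsum : ∀ G : ℕ → ℝ → ℝ, (∀ i, G i 0 = 0) →
      ∑ i ∈ Finset.range n, G i (c' i) = ∑ j ∈ s, G (e j) (c j) := by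
    intro G hG
    rw [← Finset.sum_subset hn fun i _ hi => by rw [hc'0 i hi, hG], Finset.sum_image he.injOn]
    exact Finset.sum_congr rfl fun j hj => by rw [hc' j hj]
  have hL1 := ha n c'
  rw [hsum (fun _ t => |t|) fun _ => abs_zero] at hL1
  exact hL1.trans_eq (iSup_congr fun z =>
    congrArg _ (hsum (fun i t => t * f i z) fun _ => zero_mul _))

end L1Sequences

section Mazur

open MeasureTheory

variable {X : Type*} [TopologicalSpace X] [CompactSpace X]

lemma tendsto_positiveLinearMap_zero_of_t2 [T2Space X] (Λ : C(X, ℝ) →ₚ[ℝ] ℝ) {h : ℕ → C(X, ℝ)}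
    {C : ℝ} (hC : ∀ n x, |h n x| ≤ C) (hlim : ∀ x, Tendsto (fun n => h n x) atTop (𝓝 0)) :
    Tendsto (fun n => Λ (h n)) atTop (𝓝 0) := by
  let _ : MeasurableSpace X := borel X
  have : BorelSpace X := ⟨rfl⟩
  let Λc : CompactlySupportedContinuousMap X ℝ →ₚ[ℝ] ℝ :=
    .mk₀ { toFun v := Λ v, map_add' v w := map_add Λ (v : C(X, ℝ)) w,
           map_smul' c v := map_smul Λ c (v : C(X, ℝ)) } fun v hv => map_nonneg Λ hv
  have hintegral : ∀ v : C(X, ℝ), ∫ x, v x ∂(RealRMK.rieszMeasure Λc) = Λ v := fun v =>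
    RealRMK.integral_rieszMeasure Λc (CompactlySupportedContinuousMap.continuousMapEquiv v)
  simp only [← hintegral]
  rw [← integral_zero X ℝ (μ := RealRMK.rieszMeasure Λc)]
  exact tendsto_integral_of_dominated_convergence (fun _ => C)
    (fun n => (h n).continuous.aestronglyMeasurable) (integrable_const C)
    (fun n => .of_forall (hC n)) (.of_forall hlim)

lemma tendsto_positiveLinearMap_zero (Λ : C(X, ℝ) →ₚ[ℝ] ℝ) {h : ℕ → C(X, ℝ)}
    {C : ℝ} (hC : ∀ n x, |h n x| ≤ C) (hlim : ∀ x, Tendsto (fun n => h n x) atTop (𝓝 0)) :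
    Tendsto (fun n => Λ (h n)) atTop (𝓝 0) := by
  let mk : C(X, T2Quotient X) := ⟨T2Quotient.mk, T2Quotient.continuous_mk X⟩
  have : CompactSpace (T2Quotient X) := Quotient.compactSpace
  let Λq : C(T2Quotient X, ℝ) →ₚ[ℝ] ℝ :=
    .mk₀ (Λ.toLinearMap ∘ₗ (ContinuousMap.compRightAlgHom ℝ ℝ mk).toLinearMap)
      fun v hv => map_nonneg Λ fun x => hv (mk x)
  let hq (n : ℕ) : C(T2Quotient X, ℝ) :=
    ⟨T2Quotient.lift (h n).continuous, T2Quotient.continuous_lift (h n).continuous⟩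
  have hhq : ∀ n x, hq n (mk x) = h n x := fun n => T2Quotient.lift_mk (h n).continuous
  have hΛq : ∀ n, Λq (hq n) = Λ (h n) := fun n => congrArg Λ (ContinuousMap.ext (hhq n))
  simp only [← hΛq]
  refine tendsto_positiveLinearMap_zero_of_t2 Λq (C := C) (fun n => ?_) ?_ <;>
    refine (T2Quotient.surjective_mk X).forall.2 fun x => ?_
  · exact (hhq n x).symm ▸ hC n x
  · exact (hlim x).congr fun n => (hhq n x).symm

-- The separating functional of Hahn-Banach is positive because `{v | v < ε}` contains the
-- negative cone.
lemma exists_positiveLinearMap_of_disjoint {ε : ℝ} (hε : 0 < ε) {K : Set C(X, ℝ)}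
    (hK : Convex ℝ K) (hKε : ∀ v ∈ K, ∃ x, ε ≤ v x) :
    ∃ (Λ : C(X, ℝ) →ₚ[ℝ] ℝ) (u : ℝ), 0 < u ∧ ∀ v ∈ K, u ≤ Λ v := by
  let S : Set C(X, ℝ) := {v | Set.MapsTo v Set.univ (Set.Iio ε)}
  have hS : Convex ℝ S := fun v hv w hw s t hs ht hst x hx =>
    convex_Iio ε (hv hx) (hw hx) hs ht hst
  have hdisj : Disjoint S K := Set.disjoint_left.2 fun v hvS hvK =>
    (hKε v hvK).elim fun x hx => (hvS (Set.mem_univ x)).not_ge hx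
  obtain ⟨Λ, u, hSu, hKu⟩ := geometric_hahn_banach_open hS
    (ContinuousMap.isOpen_setOfPred_mapsTo isCompact_univ isOpen_Iio) hK hdisj
  have hu : 0 < u := by simpa using hSu 0 fun x _ => hε
  have hnonneg : ∀ v : C(X, ℝ), 0 ≤ v → 0 ≤ Λ v := by
    intro v hv
    by_contra! hneg
    have hmem : (u / Λ v) • v ∈ S := fun x _ =>
      (mul_nonpos_of_nonpos_of_nonneg (div_nonpos_of_nonneg_of_nonpos hu.le hneg.le)
        (hv x)).trans_lt hε
    have hlt := hSu _ hmem
    rw [map_smul, smul_eq_mul, div_mul_cancel₀ u hneg.ne] at hlt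
    exact hlt.false
  exact ⟨.mk₀ Λ.toLinearMap hnonneg, u, hu, hKu⟩

lemma exists_convexCombination_abs_lt {h : ℕ → C(X, ℝ)} {C : ℝ} (hC : ∀ n x, |h n x| ≤ C)
    (hlim : ∀ x, Tendsto (fun n => h n x) atTop (𝓝 0)) {ε : ℝ} (hε : 0 < ε) :
    ∃ (s : Finset ℕ) (w : ℕ → ℝ), (∀ i ∈ s, 0 ≤ w i) ∧ ∑ i ∈ s, w i = 1 ∧
      ∀ x, ∑ i ∈ s, w i * |h i x| < ε := by
  by_contra! hno
  obtain ⟨Λ, u, hu, hΛ⟩ := exists_positiveLinearMap_of_disjoint hε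
    (convex_convexHull ℝ (Set.range fun n => |h n|)) (by
      rw [convexHull_range_eq_exists_affineCombination]
      rintro _ ⟨s, w, hw, hw1, rfl⟩
      rw [s.affineCombination_eq_linear_combination _ _ hw1]
      obtain ⟨x, hx⟩ := hno s w hw hw1
      exact ⟨x, by simpa using hx⟩)
  have hΛlim : Tendsto (fun n => Λ |h n|) atTop (𝓝 0) :=
    tendsto_positiveLinearMap_zero Λ (C := C) (fun n x => by simpa using hC n x)
      fun x => by simpa using (hlim x).abs
  exact hu.not_ge (ge_of_tendsto' hΛlim fun n =>
    hΛ _ (subset_convexHull ℝ _ (Set.mem_range_self n)))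

end Mazur

lemma not_isL1Seq_of_tendsto_subseq {X : Type*} [TopologicalSpace X] [CompactSpace X]
    {f : ℕ → X → ℝ} (hf : ∀ n, Continuous (f n)) {C : ℝ} (hC : ∀ n x, |f n x| ≤ C) {φ : ℕ → ℕ}
    (hφ : StrictMono φ) {g : X → ℝ} (hg : ∀ x, Tendsto (fun n => f (φ n) x) atTop (𝓝 (g x))) :
    ¬ IsL1Seq f := by
  rintro ⟨a, ha, hL1⟩
  let e (p : Bool × ℕ) : ℕ := φ (Equiv.boolProdNatEquivNat p)
  have he : e.Injective := hφ.injective.comp Equiv.boolProdNatEquivNat.injective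
  let h (n : ℕ) : C(X, ℝ) := ⟨fun x => f (e (true, n)) x - f (e (false, n)) x, (hf _).sub (hf _)⟩
  have hhC : ∀ n x, |h n x| ≤ C + C := fun n x =>
    (abs_sub _ _).trans (add_le_add (hC _ x) (hC _ x))
  have htop : ∀ c, Tendsto (fun n => Equiv.boolProdNatEquivNat (c, n)) atTop atTop := fun c =>
    (Equiv.boolProdNatEquivNat.injective.comp (Prod.mk_right_injective c)).nat_tendsto_atTop
  have hlim : ∀ x, Tendsto (fun n => h n x) atTop (𝓝 0) := fun x =>
    sub_self (g x) ▸ ((hg x).comp (htop true)).sub ((hg x).comp (htop false))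
  obtain ⟨s, w, hw, hw1, hsmall⟩ := exists_convexCombination_abs_lt hhC hlim ha
  let c (p : Bool × ℕ) : ℝ := if p.1 then w p.2 else -w p.2
  have hlower : a * 2 ≤ ⨆ x, |∑ i ∈ s, w i * h i x| := by
    have hle := mul_sum_abs_le_iSup_of_injective hL1 he (Finset.univ ×ˢ s) c
    have habs : ∑ i ∈ s, |w i| = 1 :=
      (Finset.sum_congr rfl fun i hi => abs_of_nonneg (hw i hi)).trans hw1
    simpa [Finset.sum_product, c, habs, one_add_one_eq_two, ← Finset.sum_add_distrib, h, mul_sub,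
      ← sub_eq_add_neg] using hle
  have hupper : ⨆ x, |∑ i ∈ s, w i * h i x| ≤ a := by
    refine Real.iSup_le (fun x => ?_) ha.le
    refine (Finset.abs_sum_le_sum_abs _ _).trans (le_of_eq_of_le ?_ (hsmall x).le)
    exact Finset.sum_congr rfl fun i hi => by rw [abs_mul, abs_of_nonneg (hw i hi)]
  linarith

theorem stmt2 {X : Type*} [TopologicalSpace X] [CompactSpace X]
    (F : Set (X → ℝ)) (hFcont : ∀ f ∈ F, Continuous f)
    (hFbdd : ∃ C : ℝ, ∀ f ∈ F, ∀ x : X, |f x| ≤ C) :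
    List.TFAE [
      -- (1) no sequence of functions from `F` is an `l₁`-sequence
      ¬ ∃ f : ℕ → X → ℝ, (∀ n, f n ∈ F) ∧ IsL1Seq f,
      -- (2) `F` is tame: no sequence of functions from `F` is independent
      ¬ ∃ f : ℕ → X → ℝ, (∀ n, f n ∈ F) ∧ IsIndependentSeq f,
      -- (3) every sequence in `F` has a pointwise convergent subsequence
      ∀ f : ℕ → X → ℝ, (∀ n, f n ∈ F) → ∃ (φ : ℕ → ℕ) (g : X → ℝ), StrictMono φ ∧
        ∀ x : X, Tendsto (fun m => f (φ m) x) atTop (nhds (g x)),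
      -- (4) every function in the pointwise closure of `F` in `ℝ^X` is fragmented
      ∀ g ∈ closure F, IsFragmentedFn g,
      -- (5) `F` is eventually fragmented
      ∀ f : ℕ → X → ℝ, (∀ n, f n ∈ F) → ∃ φ : ℕ → ℕ, StrictMono φ ∧
        IsFragmentedFamilyR (Set.range fun m => f (φ m))] := by
  obtain ⟨C, hC⟩ := hFbdd
  have hcont {f : ℕ → X → ℝ} (hf : ∀ n, f n ∈ F) (n) : Continuous (f n) := hFcont _ (hf n)
  have hbdd {f : ℕ → X → ℝ} (hf : ∀ n, f n ∈ F) (n) : ∀ x, |f n x| ≤ C := hC _ (hf n)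
  have hsubseq (htame : IsTame F) {f : ℕ → X → ℝ} (hf : ∀ n, f n ∈ F) :=
    htame.exists_subseq_isFragmentedFamilyR_and_tendsto hf (hcont hf) (hbdd hf)
  tfae_have 1 → 2 := fun h1 ⟨f, hf, hind⟩ => h1 ⟨f, hf, hind.isL1Seq (hbdd hf)⟩
  tfae_have 2 → 3 := fun htame f hf =>
    let ⟨φ, g, hφ, _, hg⟩ := hsubseq htame hf
    ⟨φ, g, hφ, hg⟩
  tfae_have 3 → 1 := fun h3 ⟨f, hf, hL1⟩ =>
    let ⟨_, _, hφ, hg⟩ := h3 f hf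
    not_isL1Seq_of_tendsto_subseq (hcont hf) (hbdd hf) hφ hg hL1
  tfae_have 2 → 4 := fun htame _ => IsTame.isFragmentedFn_of_mem_closure htame hFcont hC
  tfae_have 4 → 2 := fun h4 ⟨f, hf, hind⟩ =>
    let ⟨g, hg, hfrag⟩ := hind.exists_mem_closure_not_isFragmentedFn (hcont hf) hf (hbdd hf)
    hfrag (h4 g hg)
  tfae_have 2 → 5 := fun htame f hf =>
    let ⟨φ, _, hφ, hfrag, _⟩ := hsubseq htame hf
    ⟨φ, hφ, hfrag⟩
  tfae_have 5 → 2 := fun h5 ⟨f, hf, hind⟩ =>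
    let ⟨_, hφ, hfrag⟩ := h5 f hf
    hind.not_isFragmentedFamilyR_subseq (hcont hf) hφ hfrag
  tfae_finish
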